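/- arXiv:2504.08043 — 2 statements merged into one kernel-verified Lean document; each statement's English description precedes it below -/
import Mathlib

section
/- Let D ≥ 2, let q and q' be coprime integers with q > 1 and q' > 1 and q ≠ q', and let σ be a permutation of {1,…,D}. Then the matrices M(q, σ) and M(q', σ) are left coprime. -/
/-- The `D × D` integer matrix `M(q, σ)`: diagonal entries all `q`, entry
`(σ(k), σ(k+1))` equal to `1` for `k = 1, …, D-1`, all other entries `0`. -/
def Mmat {D : ℕ} (q : ℤ) (σ : Equiv.Perm (Fin D)) : Matrix (Fin D) (Fin D) ℤ :=
  Matrix.diagonal (fun _ => q) +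
    ∑ k : Fin (D - 1),
      Matrix.single (σ ⟨(k : ℕ), by have := k.isLt; omega⟩)
        (σ ⟨(k : ℕ) + 1, by have := k.isLt; omega⟩) (1 : ℤ)

/-- Two square integer matrices are left coprime if every common left divisor of
them is unimodular. -/
def LeftCoprime {D : ℕ} (M N : Matrix (Fin D) (Fin D) ℤ) : Prop :=
  ∀ A : Matrix (Fin D) (Fin D) ℤ, A.det ≠ 0 →
    (∃ B, M = A * B) → (∃ C, N = A * C) → (A.det = 1 ∨ A.det = -1)

/-- `A` is a right multiple of `M` if `A = M * P` for some nonsingular integer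
matrix `P`. -/
def IsRightMultiple {D : ℕ} (A M : Matrix (Fin D) (Fin D) ℤ) : Prop :=
  ∃ P : Matrix (Fin D) (Fin D) ℤ, P.det ≠ 0 ∧ A = M * P

theorem Mmat_apply_apply {D : ℕ} (q : ℤ) (σ : Equiv.Perm (Fin D)) (i j : Fin D) :
    Mmat q σ (σ i) (σ j) = if i = j then q else if (i : ℕ) + 1 = j then 1 else 0 := by
  have superdiag : (∑ k : Fin (D - 1), if (k : ℕ) = i ∧ (k : ℕ) + 1 = j then (1 : ℤ) else 0) =
      if (i : ℕ) + 1 = j then 1 else 0 := by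
    split_ifs with hij
    · rw [Fintype.sum_eq_single ⟨i, by lia⟩ fun k hk => if_neg (by grind)]
      exact if_pos ⟨rfl, hij⟩
    · exact Finset.sum_eq_zero fun k _ => if_neg (by lia)
  simp only [Mmat, Matrix.add_apply, Matrix.diagonal_apply, Matrix.sum_apply, Matrix.single_apply,
    σ.injective.eq_iff, Fin.ext_iff, superdiag]
  grind

theorem isUpperTriangular_submatrix_Mmat {D : ℕ} (q : ℤ) (σ : Equiv.Perm (Fin D)) :
    ((Mmat q σ).submatrix σ σ).IsUpperTriangular := by
  intro i j hji
  have hlt : (j : ℕ) < i := hji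
  rw [Matrix.submatrix_apply, Mmat_apply_apply, if_neg (by lia), if_neg (by lia)]

theorem det_Mmat {D : ℕ} (q : ℤ) (σ : Equiv.Perm (Fin D)) : (Mmat q σ).det = q ^ D := by
  rw [← Matrix.det_submatrix_equiv_self σ,
    Matrix.det_of_isUpperTriangular (isUpperTriangular_submatrix_Mmat q σ)]
  simp only [Matrix.submatrix_apply, Mmat_apply_apply, if_true, Finset.prod_const,
    Finset.card_univ, Fintype.card_fin]

theorem leftCoprime_of_isCoprime_det {D : ℕ} {M N : Matrix (Fin D) (Fin D) ℤ}
    (h : IsCoprime M.det N.det) : LeftCoprime M N := by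
  rintro A - ⟨B, rfl⟩ ⟨C, rfl⟩
  rw [Matrix.det_mul, Matrix.det_mul] at h
  exact Int.isUnit_iff.mp (h.isUnit_of_dvd' (dvd_mul_right _ _) (dvd_mul_right _ _))

theorem stmt_2_general {D : ℕ} {q q' : ℤ} (hcop : IsCoprime q q') (σ τ : Equiv.Perm (Fin D)) :
    LeftCoprime (Mmat q σ) (Mmat q' τ) := by
  apply leftCoprime_of_isCoprime_det
  rw [det_Mmat, det_Mmat]
  exact hcop.pow

/-- for coprime `q, q' > 1` with `q ≠ q'` and any permutation `σ`,
the matrices `M(q, σ)` and `M(q', σ)` are left coprime. -/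
theorem stmt_2 (D : ℕ) (hD : 2 ≤ D) (q q' : ℤ) (hq : 1 < q) (hq' : 1 < q')
    (hne : q ≠ q') (hcop : IsCoprime q q') (σ : Equiv.Perm (Fin D)) :
    LeftCoprime (Mmat q σ) (Mmat q' σ) :=
  stmt_2_general hcop σ σ
end

section
/- Let q_1 < q_2 < ⋯ < q_L be pairwise coprime positive integers with q_1 > 1. Every nonsingular 2×2 integer matrix R that is a common right multiple of all 2L matrices M_{i,1} = [[q_i, 0], [1, q_i]] and M_{i,2} = [[q_i, 1], [0, q_i]], 1 ≤ i ≤ L, satisfies (q_1·q_2⋯q_L)⁴ ∣ det R; in particular |det R| ≥ (q_1·q_2⋯q_L)⁴. -/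
/-!
Multiples of `q + x` and of `q + y`, where `x` and `y` are nilpotents with `x ^ 2 = y ^ 2 = 0` and
`x * y + y * x = 1`, such as the two off-diagonal matrix units, are multiples of `q ^ 2`: the
conjugates `q - x` and `q - y` carry them to multiples of `q ^ 2`, and
`y * (q - x) + x * (q - y) = q * (x + y) - 1` is invertible modulo `q ^ 2`, since `(x + y) ^ 2 = 1`.
So `R` is divisible by the scalar matrix `q ^ 2`, whose determinant is `q ^ 4`, and coprimality
assembles these divisibilities of `det R`.
-/

theorem dvd_mul_of_commute {S : Type*} [Semigroup S] {a b c : S} (hca : Commute c a)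
    (h : c ∣ b) : c ∣ a * b := by
  obtain ⟨p, rfl⟩ := h
  exact ⟨a * p, hca.symm.left_comm p⟩

section Ring

variable {B : Type*} [Ring B] {c x y r : B}

theorem sq_dvd_sub_mul_of_add_dvd (hcx : Commute c x) (hx : x ^ 2 = 0) (h : c + x ∣ r) :
    c ^ 2 ∣ (c - x) * r := by
  obtain ⟨p, rfl⟩ := h
  refine ⟨p, ?_⟩
  rw [← mul_assoc, ← hcx.mul_self_sub_mul_self_eq', ← sq, ← sq, hx, sub_zero]

theorem add_sq_eq_one_of_mul_add_mul_eq_one (hx : x ^ 2 = 0) (hy : y ^ 2 = 0)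
    (hxy : x * y + y * x = 1) :
    (x + y) ^ 2 = 1 := by
  calc (x + y) ^ 2 = x ^ 2 + y ^ 2 + (x * y + y * x) := by noncomm_ring
    _ = 1 := by rw [hx, hy, hxy, zero_add, zero_add]

theorem sq_dvd_of_add_dvd_of_add_dvd (hcx : Commute c x) (hcy : Commute c y)
    (hx : x ^ 2 = 0) (hy : y ^ 2 = 0) (hxy : x * y + y * x = 1)
    (hxr : c + x ∣ r) (hyr : c + y ∣ r) : c ^ 2 ∣ r := by
  have hcxy : Commute c (x + y) := hcx.add_right hcy
  have h_combination : y * (c - x) + x * (c - y) = c * (x + y) - 1 := by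
    rw [← hxy, mul_sub, mul_sub, ← hcx.eq, ← hcy.eq]
    noncomm_ring
  have h_dvd : c ^ 2 ∣ (c * (x + y) - 1) * r := by
    rw [← h_combination, add_mul, mul_assoc, mul_assoc]
    exact dvd_add
      (dvd_mul_of_commute (hcy.pow_left 2) (sq_dvd_sub_mul_of_add_dvd hcx hx hxr))
      (dvd_mul_of_commute (hcx.pow_left 2) (sq_dvd_sub_mul_of_add_dvd hcy hy hyr))
  have h_sq : (c * (x + y)) ^ 2 = c ^ 2 := by
    rw [hcxy.mul_pow, add_sq_eq_one_of_mul_add_mul_eq_one hx hy hxy, mul_one]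
  have h_bezout : r = c ^ 2 * r - (c * (x + y) + 1) * ((c * (x + y) - 1) * r) := by
    rw [← h_sq]
    noncomm_ring
  have h_commute : Commute (c ^ 2) (c * (x + y) + 1) :=
    (((Commute.refl c).mul_right hcxy).add_right (Commute.one_right c)).pow_left 2
  rw [h_bezout]
  exact dvd_sub (dvd_mul_right _ _) (dvd_mul_of_commute h_commute h_dvd)

end Ring

section Matrix

variable {A : Type*} [CommRing A]

theorem pow_card_dvd_det_of_scalar_dvd {n : Type*} [Fintype n] [DecidableEq n] {a : A}
    {M : Matrix n n A} (h : Matrix.scalar n a ∣ M) : a ^ Fintype.card n ∣ M.det := by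
  simpa using map_dvd Matrix.detMonoidHom h

theorem scalar_sq_dvd_of_lower_dvd_of_upper_dvd {q : A} {R : Matrix (Fin 2) (Fin 2) A}
    (h1 : !![q, 0; 1, q] ∣ R) (h2 : !![q, 1; 0, q] ∣ R) :
    Matrix.scalar (Fin 2) (q ^ 2) ∣ R := by
  have h_lower : !![q, 0; 1, q] = Matrix.scalar (Fin 2) q + !![0, 0; 1, 0] := by
    ext i j; fin_cases i <;> fin_cases j <;> simp
  have h_upper : !![q, 1; 0, q] = Matrix.scalar (Fin 2) q + !![0, 1; 0, 0] := by
    ext i j; fin_cases i <;> fin_cases j <;> simp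
  have h_lower_sq : (!![0, 0; 1, 0] : Matrix (Fin 2) (Fin 2) A) ^ 2 = 0 := by
    ext i j; fin_cases i <;> fin_cases j <;> simp [sq]
  have h_upper_sq : (!![0, 1; 0, 0] : Matrix (Fin 2) (Fin 2) A) ^ 2 = 0 := by
    ext i j; fin_cases i <;> fin_cases j <;> simp [sq]
  have h_anticomm : (!![0, 0; 1, 0] * !![0, 1; 0, 0] + !![0, 1; 0, 0] * !![0, 0; 1, 0] :
      Matrix (Fin 2) (Fin 2) A) = 1 := by
    simp [Matrix.one_fin_two]
  rw [h_lower] at h1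
  rw [h_upper] at h2
  rw [map_pow]
  have h_comm : ∀ M, Commute (Matrix.scalar (Fin 2) q) M :=
    Matrix.scalar_commute q (Commute.all q)
  exact sq_dvd_of_add_dvd_of_add_dvd (h_comm _) (h_comm _) h_lower_sq h_upper_sq h_anticomm h1 h2

theorem pow_four_dvd_det_of_lower_dvd_of_upper_dvd {q : A} {R : Matrix (Fin 2) (Fin 2) A}
    (h1 : !![q, 0; 1, q] ∣ R) (h2 : !![q, 1; 0, q] ∣ R) : q ^ 4 ∣ R.det := by
  simpa only [← pow_mul, Fintype.card_fin] using
    pow_card_dvd_det_of_scalar_dvd (scalar_sq_dvd_of_lower_dvd_of_upper_dvd h1 h2)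

theorem stmt_11_general {ι : Type*} [Fintype ι] {q : ι → A}
    (hcop : Pairwise fun i j => IsCoprime (q i) (q j)) {R : Matrix (Fin 2) (Fin 2) A}
    (h1 : ∀ i, !![q i, 0; 1, q i] ∣ R) (h2 : ∀ i, !![q i, 1; 0, q i] ∣ R) :
    (∏ i, q i) ^ 4 ∣ R.det := by
  rw [← Finset.prod_pow]
  exact Fintype.prod_dvd_of_coprime (fun _ _ hij => (hcop hij).pow)
    fun i => pow_four_dvd_det_of_lower_dvd_of_upper_dvd (h1 i) (h2 i)

end Matrix

theorem IsRightMultiple.dvd {D : ℕ} {R M : Matrix (Fin D) (Fin D) ℤ}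
    (h : IsRightMultiple R M) : M ∣ R := by
  obtain ⟨P, -, hP⟩ := h
  exact ⟨P, hP⟩

/-- every nonsingular common right multiple `R` of all `2L` matrices
`M_{i,1} = [[q_i,0],[1,q_i]]` and `M_{i,2} = [[q_i,1],[0,q_i]]` satisfies
`(q_1⋯q_L)⁴ ∣ det R`, and in particular `|det R| ≥ (q_1⋯q_L)⁴`. -/
theorem stmt_11 (L : ℕ) (hL : 1 ≤ L) (q : Fin L → ℤ) (hmono : StrictMono q)
    (hpos : ∀ i, 0 < q i) (hq1 : 1 < q ⟨0, hL⟩)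
    (hcop : ∀ i i' : Fin L, i ≠ i' → IsCoprime (q i) (q i'))
    (R : Matrix (Fin 2) (Fin 2) ℤ) (hR : R.det ≠ 0)
    (h1 : ∀ i : Fin L, IsRightMultiple R !![q i, 0; 1, q i])
    (h2 : ∀ i : Fin L, IsRightMultiple R !![q i, 1; 0, q i]) :
    (∏ i, q i) ^ 4 ∣ R.det ∧ (∏ i, q i) ^ 4 ≤ |R.det| := by
  have hdvd := stmt_11_general hcop (fun i => (h1 i).dvd) fun i => (h2 i).dvd
  exact ⟨hdvd, Int.le_of_dvd (abs_pos.mpr hR) ((dvd_abs _ _).mpr hdvd)⟩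
end
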